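/- (Stepanov) Let Ω ⊂ ℝⁿ be open and f : Ω → ℝ^m a measurable function. Then f is differentiable at Lebesgue-almost every point of the set L_f = { x ∈ Ω : limsup_{y→x} ‖f(y) − f(x)‖/‖y − x‖ < +∞ }. -/

import Mathlib

open MeasureTheory Set

open Filter Topology in
theorem stepanov_near {n : ℕ} (A : Set (EuclideanSpace ℝ (Fin n))) :
    ∀ᵐ x, x ∈ A → ∀ ε : ℝ, 0 < ε → ∀ᶠ y in 𝓝 x, ∃ z ∈ A, ‖z - y‖ ≤ ε * ‖y - x‖ := by
  have key : ∀ k : ℕ, ∀ᵐ x, x ∈ A →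
      ∀ᶠ y in 𝓝 x, ∃ z ∈ A, ‖z - y‖ ≤ (1 / ((k : ℝ) + 1)) * ‖y - x‖ := by
    intro k
    have hk : (0 : ℝ) < 1 / ((k : ℝ) + 1) := by positivity
    have h := ae_imp_of_ae_restrict
      (IsUnifLocDoublingMeasure.ae_tendsto_measure_inter_div
        (volume : Measure (EuclideanSpace ℝ (Fin n))) A ((k : ℝ) + 1))
    filter_upwards [h] with x hx hxA
    have hx' := hx hxA (l := 𝓝[≠] x) (fun y => y) (fun y => (1 / ((k : ℝ) + 1)) * ‖y - x‖) ?_ ?_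
    · have h1 : ∀ᶠ y in 𝓝[≠] x, ∃ z ∈ A, ‖z - y‖ ≤ (1 / ((k : ℝ) + 1)) * ‖y - x‖ := by
        filter_upwards [hx'.eventually (lt_mem_nhds (show (0 : ENNReal) < 1 by simp))] with y hy
        have hne : volume (A ∩ Metric.closedBall y ((1 / ((k : ℝ) + 1)) * ‖y - x‖)) ≠ 0 := by
          intro h0
          rw [h0] at hy
          simp at hy
        obtain ⟨z, hzA, hz⟩ := nonempty_of_measure_ne_zero hne
        exact ⟨z, hzA, by simpa [dist_eq_norm] using hz⟩
      rw [eventually_nhdsWithin_iff] at h1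
      filter_upwards [h1] with y hy
      by_cases hyx : y = x
      · subst hyx
        exact ⟨y, hxA, by simp⟩
      · exact hy hyx
    · refine tendsto_nhdsWithin_iff.2 ⟨?_, ?_⟩
      · have : Tendsto (fun y => (1 / ((k : ℝ) + 1)) * ‖y - x‖) (𝓝 x) (𝓝 ((1 / ((k : ℝ) + 1)) * ‖x - x‖)) :=
          Continuous.tendsto (by fun_prop) x
        simp only [sub_self, norm_zero, mul_zero] at this
        exact this.mono_left nhdsWithin_le_nhds
      · filter_upwards [self_mem_nhdsWithin] with y hy
        have : 0 < ‖y - x‖ := norm_pos_iff.2 (sub_ne_zero.2 hy)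
        exact mul_pos hk this
    · refine Eventually.of_forall fun y => ?_
      rw [Metric.mem_closedBall, dist_comm, dist_eq_norm]
      apply le_of_eq
      field_simp
  filter_upwards [ae_all_iff.2 key] with x hx hxA ε hε
  obtain ⟨k, hk⟩ := exists_nat_one_div_lt hε
  filter_upwards [hx k hxA] with y ⟨z, hz, hzy⟩
  exact ⟨z, hz, hzy.trans (by gcongr)⟩

open Filter Topology in
theorem stepanov_piece {n m : ℕ} (f : EuclideanSpace ℝ (Fin n) → EuclideanSpace ℝ (Fin m))
    (A : Set (EuclideanSpace ℝ (Fin n))) (k : ℕ) (r : ℝ) (hr : 0 < r)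
    (hA : ∀ x ∈ A, ∀ y, ‖y - x‖ < r → ‖f y - f x‖ ≤ k * ‖y - x‖)
    (hd : ∀ x ∈ A, ∀ y ∈ A, ‖y - x‖ < r) :
    ∀ᵐ x, x ∈ A → DifferentiableAt ℝ f x := by
  have hL : LipschitzOnWith (k : NNReal) f A := by
    refine LipschitzOnWith.of_dist_le_mul fun y hy x hx => ?_
    simpa [dist_eq_norm] using hA x hx y (hd x hx y hy)
  filter_upwards [stepanov_near A, hL.ae_differentiableWithinAt_of_mem (μ := volume)] with x hx1 hx2 hxA
  obtain ⟨L, hLx⟩ := hx2 hxA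
  refine ⟨L, ?_⟩
  rw [hasFDerivAt_iff_isLittleO, Asymptotics.isLittleO_iff]
  rw [hasFDerivWithinAt_iff_isLittleO, Asymptotics.isLittleO_iff] at hLx
  intro c hc
  have hM : 0 < (k : ℝ) + 2 + ‖L‖ := by positivity
  obtain ⟨ε, hε, hε1, hεc⟩ : ∃ ε : ℝ, 0 < ε ∧ ε ≤ 1 ∧ ((k : ℝ) + 2 + ‖L‖) * ε ≤ c := by
    refine ⟨min 1 (c / ((k : ℝ) + 2 + ‖L‖)), by positivity, min_le_left _ _, ?_⟩
    calc _ ≤ ((k : ℝ) + 2 + ‖L‖) * (c / ((k : ℝ) + 2 + ‖L‖)) := by gcongr; exact min_le_right _ _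
      _ = c := by field_simp
  have h3 := eventually_nhdsWithin_iff.1 (hLx hε)
  obtain ⟨δ, hδ, h3⟩ := Metric.eventually_nhds_iff.1 h3
  filter_upwards [hx1 hxA ε hε, Metric.ball_mem_nhds x (show 0 < min r (δ / 2) by positivity)]
    with y ⟨z, hzA, hzy⟩ hyb
  rw [Metric.mem_ball, dist_eq_norm, lt_min_iff] at hyb
  have hn := norm_nonneg (y - x)
  have hzy' : ‖z - y‖ ≤ ‖y - x‖ := hzy.trans (by nlinarith)
  have hzx : ‖z - x‖ ≤ 2 * ‖y - x‖ := by
    calc ‖z - x‖ = ‖(z - y) + (y - x)‖ := by congr 1; abel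
      _ ≤ ‖z - y‖ + ‖y - x‖ := norm_add_le _ _
      _ ≤ _ := by linarith
  have a1 : ‖f y - f z‖ ≤ k * (ε * ‖y - x‖) := by
    have := hA z hzA y (by rw [norm_sub_rev]; linarith)
    rw [norm_sub_rev y z] at this
    exact this.trans (by gcongr)
  have a2 : ‖f z - f x - L (z - x)‖ ≤ ε * (2 * ‖y - x‖) :=
    (h3 (by rw [dist_eq_norm]; linarith) hzA).trans (by gcongr)
  have a3 : ‖L (z - y)‖ ≤ ‖L‖ * (ε * ‖y - x‖) := (L.le_opNorm _).trans (by gcongr)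
  calc ‖f y - f x - L (y - x)‖
      = ‖(f y - f z) + (f z - f x - L (z - x)) + L (z - y)‖ := by
        congr 1; simp only [map_sub]; abel
    _ ≤ ‖f y - f z‖ + ‖f z - f x - L (z - x)‖ + ‖L (z - y)‖ := norm_add₃_le
    _ ≤ (((k : ℝ) + 2 + ‖L‖) * ε) * ‖y - x‖ := by linarith
    _ ≤ c * ‖y - x‖ := by gcongr

/-- Stepanov's theorem: a measurable function `f : Ω → ℝ^m` on an open set `Ω ⊆ ℝⁿ`
is differentiable at Lebesgue-almost every point of the set
`L_f = { x ∈ Ω : limsup_{y→x} ‖f(y) − f(x)‖/‖y − x‖ < ∞ }`. -/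
theorem stepanov {n m : ℕ} (Ω : Set (EuclideanSpace ℝ (Fin n))) (hΩ : IsOpen Ω)
    (f : EuclideanSpace ℝ (Fin n) → EuclideanSpace ℝ (Fin m)) (hf : Measurable f) :
    volume {x : EuclideanSpace ℝ (Fin n) | x ∈ Ω ∧
      (∃ C r : ℝ, 0 < r ∧ ∀ y, ‖y - x‖ < r → ‖f y - f x‖ ≤ C * ‖y - x‖) ∧
      ¬ DifferentiableAt ℝ f x} = 0 := by
  have key : ∀ k j q : ℕ, ∀ᵐ x, x ∈ ({x | ∀ y, ‖y - x‖ < 1 / ((j : ℝ) + 1) →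
      ‖f y - f x‖ ≤ k * ‖y - x‖} ∩ Metric.ball
        (TopologicalSpace.denseSeq (EuclideanSpace ℝ (Fin n)) q) ((1 / ((j : ℝ) + 1)) / 2)) →
      DifferentiableAt ℝ f x := by
    intro k j q
    refine stepanov_piece f _ k (1 / ((j : ℝ) + 1)) (by positivity) (fun x hx => hx.1) ?_
    intro x hx y hy
    have h1 := Metric.mem_ball.1 hx.2
    have h2 := Metric.mem_ball.1 hy.2
    rw [← dist_eq_norm]
    linarith [dist_triangle_right y x (TopologicalSpace.denseSeq (EuclideanSpace ℝ (Fin n)) q)]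
  have key2 := ae_all_iff.2 fun k => ae_all_iff.2 fun j => ae_all_iff.2 (key k j)
  refine measure_mono_null ?_ (ae_iff.1 key2)
  rintro x ⟨-, ⟨C, r, hr, hC⟩, hnd⟩ hall
  obtain ⟨k, hk⟩ := exists_nat_ge C
  obtain ⟨j, hj⟩ := exists_nat_one_div_lt hr
  obtain ⟨q, hq⟩ := (TopologicalSpace.denseRange_denseSeq (EuclideanSpace ℝ (Fin n))).exists_dist_lt x
    (show 0 < (1 / ((j : ℝ) + 1)) / 2 by positivity)
  refine hnd (hall k j q ⟨fun y hy => ?_, hq⟩)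
  exact (hC y (hy.trans hj)).trans (by gcongr)
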